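/- Let m, n be positive integers and p a real number with p ≥ 1. If P(x) = ∑_{|α|=m} a_α x^α is an m-homogeneous polynomial on the real space ℓ_p^n with real coefficients a_α, and P_ℂ(z) = ∑_{|α|=m} a_α z^α denotes the same polynomial viewed on the complex space ℓ_p^n, then ‖P_ℂ‖ ≤ 2^{m−1}·‖P‖, where each norm is the supremum of the absolute value over the corresponding unit ball. -/

import Mathlib

open Finset

/-- The `ℓ_p` norm on `𝕜^n` for a real exponent `p`. -/
noncomputable def lpNorm {𝕜 : Type*} [RCLike 𝕜] {n : ℕ} (p : ℝ) (x : Fin n → 𝕜) : ℝ :=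
  (∑ i, ‖x i‖ ^ p) ^ (1 / p)

/-- The sup norm of the `m`-homogeneous polynomial with coefficients `a`
over the unit ball of `ℓ_p^n`. -/
noncomputable def polyNorm {𝕜 : Type*} [RCLike 𝕜] (p : ℝ) (m n : ℕ) (a : (Fin n → ℕ) → 𝕜) : ℝ :=
  sSup {y : ℝ | ∃ x : Fin n → 𝕜, lpNorm p x ≤ 1 ∧
    y = ‖∑ α ∈ Finset.Nat.antidiagonalTuple n m, a α * ∏ i, x i ^ α i‖}

/-!
For a complex vector `z`, the function `G(u) = P_ℂ(u z + conj z)` is a polynomial of degree at most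
`m` in `u`, whose coefficients of degree `m` and `0` are `P_ℂ(z)` and `P_ℂ(conj z) = conj P_ℂ(z)`.
If `|u| = 1`, writing `u = w²` gives `u z + conj z = 2w · Re(w z)`, so
`|G(u)| = 2^m |P(Re(w z))| ≤ 2^m ‖P‖`, because `Re(w z)` lies in the real unit ball when `z` lies in
the complex one. Visser's inequality `|G_0| + |G_m| ≤ max_{|u| = 1} |G(u)|` then reads
`2 |P_ℂ(z)| ≤ 2^m ‖P‖`.
-/

theorem exists_norm_eq_one_and_pow_eq {𝕜 : Type*} [NormedField 𝕜] [IsAlgClosed 𝕜] {m : ℕ}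
    (hm : m ≠ 0) {u : 𝕜} (hu : ‖u‖ = 1) : ∃ w : 𝕜, ‖w‖ = 1 ∧ w ^ m = u := by
  obtain ⟨w, hw⟩ := IsAlgClosed.exists_pow_nat_eq u (Nat.pos_of_ne_zero hm)
  refine ⟨w, ?_, hw⟩
  rw [← pow_eq_one_iff_of_nonneg (norm_nonneg w) hm, ← norm_pow, hw, hu]

theorem exists_norm_eq_one_and_norm_add_mul_eq {𝕜 : Type*} [RCLike 𝕜] (a b : 𝕜) :
    ∃ v : 𝕜, ‖v‖ = 1 ∧ ‖a + v * b‖ = ‖a‖ + ‖b‖ := by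
  obtain ⟨c, hc, hca⟩ := RCLike.exists_norm_mul_eq_self a
  obtain ⟨d, hd, hdb⟩ := RCLike.exists_norm_eq_mul_self b
  refine ⟨c * d, by rw [norm_mul, hc, hd, one_mul], ?_⟩
  calc ‖a + c * d * b‖ = ‖c * ((‖a‖ + ‖b‖ : ℝ) : 𝕜)‖ := by
        rw [RCLike.ofReal_add, mul_add, hca, mul_assoc, ← hdb]
    _ = ‖a‖ + ‖b‖ := by
        rw [norm_mul, hc, one_mul, RCLike.norm_ofReal, abs_of_nonneg (by positivity)]

section RootsOfUnity

variable {R : Type*} [CommRing R] [IsDomain R] {ζ : R} {m : ℕ}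

theorem sum_pow_pow_eq_zero_of_isPrimitiveRoot (hζ : IsPrimitiveRoot ζ m) {k : ℕ}
    (hk : ¬ m ∣ k) : ∑ j ∈ range m, (ζ ^ k) ^ j = 0 := by
  have hζk : ζ ^ k - 1 ≠ 0 := sub_ne_zero.2 fun h => hk (hζ.dvd_of_pow_eq_one k h)
  refine eq_zero_of_ne_zero_of_mul_right_eq_zero hζk ?_
  rw [geom_sum_mul, pow_right_comm, hζ.pow_eq_one, one_pow, sub_self]

theorem sum_eval_mul_pow_of_isPrimitiveRoot (hζ : IsPrimitiveRoot ζ m) (hm : 0 < m)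
    {G : Polynomial R} (hG : G.natDegree ≤ m) (u : R) :
    ∑ j ∈ range m, G.eval (u * ζ ^ j) = m * (G.coeff 0 + G.coeff m * u ^ m) := by
  have expand : ∑ j ∈ range m, G.eval (u * ζ ^ j) =
      ∑ k ∈ range (m + 1), G.coeff k * u ^ k * ∑ j ∈ range m, (ζ ^ k) ^ j := by
    simp only [Polynomial.eval_eq_sum_range' (Nat.lt_succ_of_le hG), mul_sum]
    rw [sum_comm]
    refine sum_congr rfl fun k _ => sum_congr rfl fun j _ => ?_
    rw [mul_pow, pow_right_comm, mul_assoc]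
  have middle_terms : ∀ k ∈ range (m + 1), k ≠ 0 ∧ k ≠ m →
      G.coeff k * u ^ k * ∑ j ∈ range m, (ζ ^ k) ^ j = 0 := by
    rintro k hk ⟨hk0, hkm⟩
    have hlt : k < m := lt_of_le_of_ne (mem_range_succ_iff.1 hk) hkm
    rw [sum_pow_pow_eq_zero_of_isPrimitiveRoot hζ (Nat.not_dvd_of_pos_of_lt (by lia) hlt), mul_zero]
  rw [expand, sum_eq_add_of_mem 0 m (by simp) (by simp) hm.ne middle_terms, hζ.pow_eq_one]
  simp only [pow_zero, one_pow, sum_const, card_range, nsmul_eq_mul]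
  ring

end RootsOfUnity

/-- Visser's inequality: average `G` over the `m`-th roots of unity, rotated so that the two
surviving terms `G_0` and `G_m u^m` have the same argument. -/
theorem norm_coeff_zero_add_norm_coeff_le {m : ℕ} (hm : 0 < m) {G : Polynomial ℂ}
    (hG : G.natDegree ≤ m) {B : ℝ} (hB : ∀ u : ℂ, ‖u‖ = 1 → ‖G.eval u‖ ≤ B) :
    ‖G.coeff 0‖ + ‖G.coeff m‖ ≤ B := by
  obtain ⟨v, hv, hv_add⟩ := exists_norm_eq_one_and_norm_add_mul_eq (G.coeff 0) (G.coeff m)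
  obtain ⟨u, hu, rfl⟩ := exists_norm_eq_one_and_pow_eq hm.ne' hv
  have hζ := Complex.isPrimitiveRoot_exp m hm.ne'
  set ζ := Complex.exp (2 * Real.pi * Complex.I / m)
  have hζ_norm : ‖ζ‖ = 1 := hζ.norm'_eq_one hm.ne'
  refine le_of_mul_le_mul_left ?_ (Nat.cast_pos.2 hm : (0 : ℝ) < m)
  calc m * (‖G.coeff 0‖ + ‖G.coeff m‖) = ‖∑ j ∈ range m, G.eval (u * ζ ^ j)‖ := by
        rw [sum_eval_mul_pow_of_isPrimitiveRoot hζ hm hG, norm_mul, Complex.norm_natCast, ← hv_add,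
          mul_comm (u ^ m)]
    _ ≤ ∑ j ∈ range m, ‖G.eval (u * ζ ^ j)‖ := norm_sum_le _ _
    _ ≤ ∑ _j ∈ range m, B := sum_le_sum fun j _ => hB _ (by simp [hu, hζ_norm])
    _ = m * B := by simp

theorem coeff_prod_of_natDegree_le_apply {R ι : Type*} [CommSemiring R] (s : Finset ι)
    (f : ι → Polynomial R) (d : ι → ℕ) (hf : ∀ i ∈ s, (f i).natDegree ≤ d i) :
    (∏ i ∈ s, f i).coeff (∑ i ∈ s, d i) = ∏ i ∈ s, (f i).coeff (d i) := by
  classical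
  induction s using Finset.induction_on with
  | empty => simp
  | insert i s hi ih =>
    obtain ⟨hfi, hfs⟩ := forall_mem_insert _ _ _ |>.1 hf
    have hprod : (∏ j ∈ s, f j).natDegree ≤ ∑ j ∈ s, d j :=
      (Polynomial.natDegree_prod_le s f).trans (sum_le_sum hfs)
    rw [prod_insert hi, prod_insert hi, sum_insert hi,
      Polynomial.coeff_mul_add_eq_of_natDegree_le hfi hprod, ih hfs]

section Homogeneous

open MvPolynomial

variable {R σ : Type*} [CommSemiring R] {m : ℕ} {P : MvPolynomial σ R}

theorem eval_smul_of_isHomogeneous (hP : P.IsHomogeneous m) (c : R) (x : σ → R) :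
    eval (c • x) P = c ^ m * eval x P := by
  rw [eval_eq, eval_eq, mul_sum]
  refine sum_congr rfl fun d hd => ?_
  have hdeg : m = ∑ i ∈ d.support, d i := hP.degree_eq_sum_deg_support hd
  simp only [Pi.smul_apply, smul_eq_mul, mul_pow, prod_mul_distrib, prod_pow_eq_pow_sum, ← hdeg]
  rw [mul_left_comm]

theorem coeff_aeval_of_isHomogeneous (hP : P.IsHomogeneous m) {k : ℕ} {f : σ → Polynomial R}
    (hf : ∀ i, (f i).natDegree ≤ k) :
    (aeval f P).coeff (m * k) = eval (fun i => (f i).coeff k) P := by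
  rw [aeval_def, eval₂_eq, eval_eq, Polynomial.finsetSum_coeff]
  refine sum_congr rfl fun d hd => ?_
  have hdeg : m * k = ∑ i ∈ d.support, d i * k := by
    rw [← sum_mul, ← hP.degree_eq_sum_deg_support hd]
  rw [← Polynomial.C_eq_algebraMap, Polynomial.coeff_C_mul, hdeg,
    coeff_prod_of_natDegree_le_apply _ _ _ fun i _ =>
      Polynomial.natDegree_pow_le_of_le (d i) (hf i)]
  simp only [Polynomial.coeff_pow_of_natDegree_le (hf _)]

theorem polynomial_eval_aeval (f : σ → Polynomial R) (u : R) (P : MvPolynomial σ R) :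
    (aeval f P).eval u = eval (fun i => (f i).eval u) P :=
  comp_aeval_apply f (Polynomial.aeval u) P

end Homogeneous

section Complexification

open MvPolynomial ComplexConjugate

variable {σ : Type*} {m : ℕ}

theorem norm_eval_add_norm_eval_le (hm : 0 < m) {P : MvPolynomial σ ℂ} (hP : P.IsHomogeneous m)
    (x y : σ → ℂ) {B : ℝ} (hB : ∀ u : ℂ, ‖u‖ = 1 → ‖eval (u • x + y) P‖ ≤ B) :
    ‖eval x P‖ + ‖eval y P‖ ≤ B := by
  let pencil : σ → Polynomial ℂ := fun i => .C (x i) * .X + .C (y i)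
  have pencil_deg : ∀ i, (pencil i).natDegree ≤ 1 := fun i => Polynomial.natDegree_linear_le
  have eval_pencil (u : ℂ) : (aeval pencil P).eval u = eval (u • x + y) P := by
    have eval_apply : (fun i => (pencil i).eval u) = u • x + y :=
      funext fun i => by simp [pencil, mul_comm u]
    rw [polynomial_eval_aeval, eval_apply]
  have coeff_zero : (aeval pencil P).coeff 0 = eval y P := by
    rw [Polynomial.coeff_zero_eq_eval_zero, eval_pencil, zero_smul, zero_add]
  have coeff_top : (aeval pencil P).coeff m = eval x P := by
    simpa [pencil] using coeff_aeval_of_isHomogeneous hP pencil_deg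
  have natDegree_le : (aeval pencil P).natDegree ≤ m := by
    simpa using aeval_natDegree_le P hP.totalDegree_le pencil pencil_deg
  rw [add_comm, ← coeff_zero, ← coeff_top]
  exact norm_coeff_zero_add_norm_coeff_le hm natDegree_le fun u hu => (eval_pencil u).symm ▸ hB u hu

theorem sq_mul_add_conj_eq {w : ℂ} (hw : ‖w‖ = 1) (z : ℂ) :
    w ^ 2 * z + conj z = 2 * w * ((w * z).re : ℂ) := by
  have hww : w * conj w = 1 := by rw [Complex.mul_conj, Complex.normSq_eq_norm_sq, hw]; simp
  rw [Complex.re_eq_add_conj, map_mul]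
  linear_combination -conj z * hww

theorem aeval_ofReal (P : MvPolynomial σ ℝ) (x : σ → ℝ) :
    aeval (fun i => (x i : ℂ)) P = (eval x P : ℂ) :=
  aeval_algebraMap_apply ℂ x P

theorem aeval_conj (P : MvPolynomial σ ℝ) (z : σ → ℂ) :
    aeval (fun i => conj (z i)) P = conj (aeval z P) :=
  (comp_aeval_apply z Complex.conjAe.toAlgHom P).symm

theorem norm_aeval_le_two_pow_mul (hm : 0 < m) {P : MvPolynomial σ ℝ} (hP : P.IsHomogeneous m)
    (z : σ → ℂ) {M : ℝ} (hM : ∀ w : ℂ, ‖w‖ = 1 → ‖eval (fun i => (w * z i).re) P‖ ≤ M) :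
    ‖aeval z P‖ ≤ 2 ^ (m - 1) * M := by
  have eval_map_eq (x : σ → ℂ) : eval x (map (algebraMap ℝ ℂ) P) = aeval x P := eval_map _ _ _
  have pencil_bound (u : ℂ) (hu : ‖u‖ = 1) :
      ‖eval (u • z + fun i => conj (z i)) (map (algebraMap ℝ ℂ) P)‖ ≤ 2 ^ m * M := by
    obtain ⟨w, hw, rfl⟩ := exists_norm_eq_one_and_pow_eq two_ne_zero hu
    have on_real_line : (w ^ 2 • z + fun i => conj (z i)) =
        (2 * w) • fun i => ((w * z i).re : ℂ) := funext fun i => sq_mul_add_conj_eq hw (z i)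
    rw [on_real_line, eval_smul_of_isHomogeneous (hP.map _), eval_map_eq, aeval_ofReal, norm_mul,
      Complex.norm_real, norm_pow, norm_mul, hw, mul_one, Complex.norm_ofNat]
    gcongr
    exact hM w hw
  have doubled := norm_eval_add_norm_eval_le hm (hP.map _) z _ pencil_bound
  rw [eval_map_eq, eval_map_eq, aeval_conj, RCLike.norm_conj,
    ← pow_sub_one_mul hm.ne'] at doubled
  linarith

end Complexification

section TuplePolynomial

open MvPolynomial

variable {R : Type*} [CommSemiring R] {n : ℕ}

/-- The `m`-homogeneous polynomial `∑_{|α| = m} a_α X^α` in `n` variables, as a multivariate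
polynomial. Only the values of `a` at tuples of sum `m` matter. -/
noncomputable def tuplePolynomial (m : ℕ) (a : (Fin n → ℕ) → R) : MvPolynomial (Fin n) R :=
  ∑ α ∈ Finset.Nat.antidiagonalTuple n m, monomial (Finsupp.equivFunOnFinite.symm α) (a α)

theorem isHomogeneous_tuplePolynomial (m : ℕ) (a : (Fin n → ℕ) → R) :
    (tuplePolynomial m a).IsHomogeneous m := by
  refine IsHomogeneous.sum _ _ _ fun α hα => isHomogeneous_monomial _ ?_
  rw [Finsupp.degree_eq_sum]
  exact Finset.Nat.mem_antidiagonalTuple.1 hα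

theorem aeval_tuplePolynomial {S : Type*} [CommSemiring S] [Algebra R S] (m : ℕ)
    (a : (Fin n → ℕ) → R) (x : Fin n → S) :
    aeval x (tuplePolynomial m a) =
      ∑ α ∈ Finset.Nat.antidiagonalTuple n m, algebraMap R S (a α) * ∏ i, x i ^ α i := by
  simp [tuplePolynomial, aeval_monomial, Finsupp.prod_fintype]

end TuplePolynomial

section Norms

variable {𝕜 𝕜' : Type*} [RCLike 𝕜] [RCLike 𝕜'] {n : ℕ} {p : ℝ}

theorem lpNorm_le_lpNorm (hp : 0 ≤ p) {x : Fin n → 𝕜} {y : Fin n → 𝕜'}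
    (hxy : ∀ i, ‖x i‖ ≤ ‖y i‖) : lpNorm p x ≤ lpNorm p y := by
  unfold lpNorm
  gcongr with i
  exact hxy i

theorem norm_apply_le_lpNorm (hp : 0 < p) (x : Fin n → 𝕜) (i : Fin n) : ‖x i‖ ≤ lpNorm p x := by
  rw [lpNorm, one_div, Real.le_rpow_inv_iff_of_pos (norm_nonneg _) (by positivity) hp]
  exact single_le_sum (f := fun j => ‖x j‖ ^ p) (fun j _ => by positivity) (mem_univ i)

theorem norm_sum_mul_prod_pow_le {ι : Type*} [Fintype ι] (s : Finset (ι → ℕ)) (a : (ι → ℕ) → 𝕜)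
    {x : ι → 𝕜} (hx : ∀ i, ‖x i‖ ≤ 1) :
    ‖∑ α ∈ s, a α * ∏ i, x i ^ α i‖ ≤ ∑ α ∈ s, ‖a α‖ := by
  refine norm_sum_le_of_le s fun α _ => ?_
  simp only [norm_mul, norm_prod, norm_pow]
  exact mul_le_of_le_one_right (norm_nonneg _)
    (prod_le_one (fun _ _ => by positivity) fun i _ => pow_le_one₀ (norm_nonneg _) (hx i))

theorem polyNorm_nonneg (p : ℝ) (m : ℕ) (a : (Fin n → ℕ) → 𝕜) : 0 ≤ polyNorm p m n a := by
  refine Real.sSup_nonneg ?_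
  rintro _ ⟨x, _, rfl⟩
  exact norm_nonneg _

theorem norm_eval_tuplePolynomial_le_polyNorm (hp : 0 < p) (m : ℕ) (a : (Fin n → ℕ) → 𝕜)
    {x : Fin n → 𝕜} (hx : lpNorm p x ≤ 1) :
    ‖MvPolynomial.eval x (tuplePolynomial m a)‖ ≤ polyNorm p m n a := by
  refine le_csSup ⟨∑ α ∈ Finset.Nat.antidiagonalTuple n m, ‖a α‖, ?_⟩
    ⟨x, hx, congrArg norm (aeval_tuplePolynomial m a x)⟩
  rintro _ ⟨y, hy, rfl⟩
  exact norm_sum_mul_prod_pow_le _ a fun i => (norm_apply_le_lpNorm hp y i).trans hy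

end Norms

theorem complexification_norm_bound_general (m n : ℕ) (hm : 0 < m) (p : ℝ) (hp : 0 < p)
    (a : (Fin n → ℕ) → ℝ) :
    polyNorm (𝕜 := ℂ) p m n (fun α => (a α : ℂ)) ≤ 2 ^ (m - 1) * polyNorm (𝕜 := ℝ) p m n a := by
  refine Real.sSup_le ?_ (mul_nonneg (by positivity) (polyNorm_nonneg p m a))
  rintro _ ⟨z, hz, rfl⟩
  have value_eq : ∑ α ∈ Finset.Nat.antidiagonalTuple n m, (a α : ℂ) * ∏ i, z i ^ α i =
      MvPolynomial.aeval z (tuplePolynomial m a) := (aeval_tuplePolynomial m a z).symm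
  rw [value_eq]
  refine norm_aeval_le_two_pow_mul hm (isHomogeneous_tuplePolynomial m a) z fun w hw => ?_
  have re_mem_ball : lpNorm p (fun i => (w * z i).re) ≤ 1 := by
    refine (lpNorm_le_lpNorm hp.le fun i => ?_).trans hz
    simpa [hw] using Complex.abs_re_le_norm (w * z i)
  exact norm_eval_tuplePolynomial_le_polyNorm hp m a re_mem_ball

/-- If `P` is an `m`-homogeneous polynomial with real coefficients on the
real space `ℓ_p^n` and `P_ℂ` is the same polynomial on the complex space `ℓ_p^n`, then
`‖P_ℂ‖ ≤ 2^{m-1} ‖P‖`. -/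
theorem complexification_norm_bound (m n : ℕ) (hm : 0 < m) (hn : 0 < n)
    (p : ℝ) (hp : 1 ≤ p) (a : (Fin n → ℕ) → ℝ) :
    polyNorm (𝕜 := ℂ) p m n (fun α => (a α : ℂ)) ≤ 2 ^ (m - 1) * polyNorm (𝕜 := ℝ) p m n a :=
  complexification_norm_bound_general m n hm p (zero_lt_one.trans_le hp) a
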